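/- arXiv:2504.15269 — 10 statements merged into one kernel-verified Lean document; each statement's English description precedes it below -/
import Mathlib

section
/- For every real b > 0, every real c ≠ 0 and every real t ≥ 0, the infinite product ∏_{k=1}^∞ (1 + t/(2π²k² + c²/2))^{-b} converges and equals (sinh(c/2)/(c/2))^b · (s/sinh(s))^b, where s = ((c²/2 + t)/2)^{1/2}. (This identifies the Laplace transform of the exponentially tilted Kolmogorov-Gamma distribution KG(b,c), defined as the law of (1/(2π²))∑_{k=1}^∞ ε_k/(k² + c²/(4π²)) with ε_k i.i.d. Gamma(b,1), and is the analytic core of the statement that exponential tilting of KG(b,0) by exp(−c²x/2) yields KG(b,c).) -/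
open Real

lemma sinh_div_self_pos' (x : ℝ) (hx : x ≠ 0) : 0 < Real.sinh x / x := by
  rcases lt_or_gt_of_ne hx with h | h
  · exact div_pos_of_neg_of_neg (Real.sinh_neg_iff.2 h) h
  · exact div_pos (Real.sinh_pos_iff.2 h) h

lemma hasProd_sinh (x : ℝ) (hx : x ≠ 0) :
    HasProd (fun k : ℕ => 1 + x ^ 2 / (π ^ 2 * ((k : ℝ) + 1) ^ 2)) (Real.sinh x / x) := by
  have hs : Summable (fun k : ℕ => x ^ 2 / (π ^ 2 * ((k : ℝ) + 1) ^ 2)) := by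
    have h1 : Summable (fun k : ℕ => 1 / ((k : ℝ) + 1) ^ 2) := by
      have := (summable_nat_add_iff 1).2 (Real.summable_one_div_nat_pow.2 (one_lt_two))
      simpa using this
    refine (h1.mul_left (x ^ 2 / π ^ 2)).congr fun k => ?_
    field_simp
  have hm := Real.multipliable_one_add_of_summable hs
  rw [hm.hasProd_iff_tendsto_nat]
  have hz : ((x / π : ℝ) : ℂ) * Complex.I ≠ 0 := by
    refine mul_ne_zero ?_ Complex.I_ne_zero
    exact_mod_cast div_ne_zero hx pi_ne_zero
  have h := tendsto_euler_sin_prod' hz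
  have h2 := (Complex.continuous_re.tendsto _).comp h
  have hxC : (x : ℂ) ≠ 0 := by exact_mod_cast hx
  have hpC : (π : ℂ) ≠ 0 := by exact_mod_cast pi_ne_zero
  have e : Complex.sin (π * (((x / π : ℝ) : ℂ) * Complex.I)) / (π * (((x / π : ℝ) : ℂ) * Complex.I))
      = ((Real.sinh x / x : ℝ) : ℂ) := by
    have : (π : ℂ) * (((x / π : ℝ) : ℂ) * Complex.I) = x * Complex.I := by
      push_cast; field_simp
    rw [this, Complex.sin_mul_I]
    push_cast
    field_simp [Complex.I_ne_zero]
  rw [e, Complex.ofReal_re] at h2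
  refine h2.congr fun n => ?_
  have : ∏ i ∈ Finset.range n, (1 + sineTerm (((x / π : ℝ) : ℂ) * Complex.I) i)
      = ((∏ k ∈ Finset.range n, (1 + x ^ 2 / (π ^ 2 * ((k : ℝ) + 1) ^ 2)) : ℝ) : ℂ) := by
    push_cast
    refine Finset.prod_congr rfl fun k _ => ?_
    have : (k : ℂ) + 1 ≠ 0 := by exact_mod_cast k.succ_ne_zero
    simp only [sineTerm, mul_pow, Complex.I_sq]
    push_cast
    field_simp
  simp only [Function.comp_apply, this, Complex.ofReal_re]

lemma hasProd_rpow' {f : ℕ → ℝ} {a : ℝ} (hf : ∀ k, 0 ≤ f k) (ha : a ≠ 0) (p : ℝ)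
    (h : HasProd f a) : HasProd (fun k => f k ^ p) (a ^ p) := by
  have h2 := (Real.continuousAt_rpow_const a p (Or.inl ha)).tendsto.comp h
  refine h2.congr fun s => ?_
  simp only [Function.comp_apply]
  exact (Real.finset_prod_rpow s f (fun i _ => hf i) p).symm

/-- Laplace transform of the exponentially tilted Kolmogorov-Gamma distribution
`KG(b,c)`: for `b > 0`, `c ≠ 0`, `t ≥ 0`,
`∏_{k=1}^∞ (1 + t/(2π²k² + c²/2))^{-b} = (sinh(c/2)/(c/2))^b · (s/sinh s)^b`
with `s = ((c²/2 + t)/2)^{1/2}`. -/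
theorem kg_tilted_laplace_product (b c t : ℝ) (hb : 0 < b) (hc : c ≠ 0) (ht : 0 ≤ t) :
    HasProd (fun k : ℕ => (1 + t / (2 * π ^ 2 * ((k : ℝ) + 1) ^ 2 + c ^ 2 / 2)) ^ (-b))
      ((Real.sinh (c / 2) / (c / 2)) ^ b *
        (Real.sqrt ((c ^ 2 / 2 + t) / 2) / Real.sinh (Real.sqrt ((c ^ 2 / 2 + t) / 2))) ^ b) := by
  have hc2 : c / 2 ≠ 0 := by simpa using hc
  have hcp : 0 < c ^ 2 := by positivity
  have hq : 0 < (c ^ 2 / 2 + t) / 2 := by positivity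
  set s := Real.sqrt ((c ^ 2 / 2 + t) / 2) with hs
  have hs0 : 0 < s := Real.sqrt_pos.2 hq
  have hs2 : s ^ 2 = (c ^ 2 / 2 + t) / 2 := Real.sq_sqrt hq.le
  have p1 := sinh_div_self_pos' _ hc2
  have p2 := sinh_div_self_pos' _ hs0.ne'
  have A := hasProd_rpow' (fun k => by positivity) p1.ne' b (hasProd_sinh _ hc2)
  have B := hasProd_rpow' (fun k => by positivity) p2.ne' (-b) (hasProd_sinh _ hs0.ne')
  have C := A.mul B
  have e : (s / Real.sinh s) ^ b = (Real.sinh s / s) ^ (-b) := by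
    rw [Real.rpow_neg p2.le, ← Real.inv_rpow p2.le, inv_div]
  rw [e]
  convert C using 2 with k
  have hp := pi_pos
  have q1 : 0 < 1 + (c / 2) ^ 2 / (π ^ 2 * ((k : ℝ) + 1) ^ 2) := by positivity
  have q2 : 0 < 1 + s ^ 2 / (π ^ 2 * ((k : ℝ) + 1) ^ 2) := by positivity
  have : 1 + t / (2 * π ^ 2 * ((k : ℝ) + 1) ^ 2 + c ^ 2 / 2)
      = (1 + s ^ 2 / (π ^ 2 * ((k : ℝ) + 1) ^ 2)) /
        (1 + (c / 2) ^ 2 / (π ^ 2 * ((k : ℝ) + 1) ^ 2)) := by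
    rw [eq_div_iff q1.ne', hs2]
    have : 2 * π ^ 2 * ((k : ℝ) + 1) ^ 2 + c ^ 2 / 2 ≠ 0 := by positivity
    field_simp
    ring
  rw [this, Real.div_rpow q2.le q1.le, Real.rpow_neg q1.le, div_inv_eq_mul, mul_comm]
end

section
/- Define sinhc(x) = sinh(x)/x for real x ≠ 0 and sinhc(0) = 1. Then for all real numbers a ≥ 0 and b ≥ 0, sinhc(a + b) ≤ 2 · sinhc(a) · cosh(b). -/
open Real

/-- `sinhc x = sinh x / x` for `x ≠ 0`, with `sinhc 0 = 1`. -/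
noncomputable def sinhc (x : ℝ) : ℝ := if x = 0 then 1 else Real.sinh x / x

theorem sinh_le_aux (b : ℝ) (hb : 0 ≤ b) : Real.sinh b ≤ 2 * b * Real.cosh b := by
  have h1 := Real.add_one_le_exp (-(2 * b))
  have h2 : Real.exp (-b) = Real.exp b * Real.exp (-(2 * b)) := by
    rw [← Real.exp_add]; ring_nf
  have h3 := mul_le_mul_of_nonneg_left h1 (Real.exp_pos b).le
  have h4 := mul_nonneg hb (Real.exp_pos (-b)).le
  have h5 := mul_nonneg hb (Real.exp_pos b).le
  rw [Real.sinh_eq, Real.cosh_eq]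
  nlinarith

theorem cosh_le_aux (a : ℝ) (ha : 0 ≤ a) : a * Real.cosh a ≤ (1 + a) * Real.sinh a := by
  have h1 : a ≤ Real.sinh a := Real.self_le_sinh_iff.2 ha
  have h2 : Real.exp (-a) ≤ 1 := Real.exp_le_one_iff.2 (by linarith)
  have h3 := Real.cosh_sub_sinh a
  have h4 := mul_le_mul_of_nonneg_left h2 ha
  rw [← h3] at h4
  linarith

/-- For all `a ≥ 0` and `b ≥ 0`, `sinhc (a + b) ≤ 2 · sinhc a · cosh b`. -/
theorem sinhc_add_le (a b : ℝ) (ha : 0 ≤ a) (hb : 0 ≤ b) :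
    sinhc (a + b) ≤ 2 * sinhc a * Real.cosh b := by
  have hs := sinh_le_aux b hb
  have hc := Real.one_le_cosh b
  rcases ha.eq_or_lt with rfl | ha'
  · rcases hb.eq_or_lt with rfl | hb'
    · simp [sinhc]
    · have : b ≠ 0 := hb'.ne'
      simp only [sinhc, zero_add, this, if_true, if_false]
      rw [div_le_iff₀ hb']
      linarith
  · have hab : 0 < a + b := by linarith
    have e1 : sinhc (a + b) = Real.sinh (a + b) / (a + b) := by simp [sinhc, hab.ne']
    have e2 : sinhc a = Real.sinh a / a := by simp [sinhc, ha'.ne']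
    have hca := cosh_le_aux a ha
    have hsa : 0 ≤ Real.sinh a := Real.sinh_nonneg_iff.2 ha
    have hsb : 0 ≤ Real.sinh b := Real.sinh_nonneg_iff.2 hb
    have hlt := (Real.sinh_lt_cosh b).le
    have k1 := mul_le_mul_of_nonneg_right hca hsb
    have k2 : (1 + a) * Real.sinh b ≤ (a + 2 * b) * Real.cosh b := by
      have := mul_le_mul_of_nonneg_left hlt ha
      linarith
    have k3 := mul_le_mul_of_nonneg_left k2 hsa
    rw [e1, e2, show 2 * (Real.sinh a / a) * Real.cosh b
      = (2 * Real.sinh a * Real.cosh b) / a by ring, div_le_div_iff₀ hab ha', Real.sinh_add]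
    linarith
end

section
/- For all real numbers a > 0 and b > 0, coth(a) · tanh(b) ≤ 1 + 2b/a. -/
open Real

/-- For all `a > 0` and `b > 0`, `coth a · tanh b ≤ 1 + 2b/a`. -/
theorem coth_mul_tanh_le (a b : ℝ) (ha : 0 < a) (hb : 0 < b) :
    (Real.cosh a / Real.sinh a) * (Real.sinh b / Real.cosh b) ≤ 1 + 2 * b / a := by
  have hsa : a ≤ Real.sinh a := Real.self_le_sinh_iff.2 ha.le
  have hsa0 : 0 < Real.sinh a := lt_of_lt_of_le ha hsa
  have hsb0 : 0 < Real.sinh b := Real.sinh_pos_iff.2 hb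
  have hcb0 : 0 < Real.cosh b := Real.cosh_pos b
  have hC : Real.cosh a / Real.sinh a ≤ 1 + 1 / a := by
    rw [div_le_iff₀ hsa0]
    have h1 : Real.cosh a - Real.sinh a = Real.exp (-a) := Real.cosh_sub_sinh a
    have h2 : Real.exp (-a) ≤ 1 := Real.exp_le_one_iff.2 (by linarith)
    have h3 : 1 ≤ Real.sinh a / a := (one_le_div ha).2 hsa
    have h4 : (1 + 1 / a) * Real.sinh a = Real.sinh a + Real.sinh a / a := by ring
    linarith
  have hT1 : Real.sinh b / Real.cosh b ≤ 1 :=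
    (div_le_one hcb0).2 (Real.sinh_lt_cosh b).le
  have hT2 : Real.sinh b / Real.cosh b ≤ 2 * b := by
    rw [div_le_iff₀ hcb0, Real.sinh_eq, Real.cosh_eq]
    have h1 : 1 - 2 * b ≤ Real.exp (-(2 * b)) := Real.one_sub_le_exp_neg _
    have h2 : Real.exp (-b) = Real.exp b * Real.exp (-(2 * b)) := by
      rw [← Real.exp_add]; congr 1; ring
    have h3 := mul_le_mul_of_nonneg_left h1 (Real.exp_pos b).le
    have h4 := mul_pos hb (Real.exp_pos (-b))
    rw [← h2] at h3
    nlinarith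
  calc _ ≤ (1 + 1 / a) * (Real.sinh b / Real.cosh b) :=
        mul_le_mul_of_nonneg_right hC (div_pos hsb0 hcb0).le
    _ = Real.sinh b / Real.cosh b + (Real.sinh b / Real.cosh b) / a := by ring
    _ ≤ 1 + 2 * b / a := add_le_add hT1 (div_le_div_of_nonneg_right hT2 ha.le)
end

section
/- For every real x > 0, define the two sequences a_n^L(x) = 2/(π^{1/2}(2x)^{3/2}) · exp(−n²/(8x)) if n is odd and a_n^L(x) = (n+1)²/(π^{1/2}(2x)^{5/2}) · exp(−(n+1)²/(8x)) if n is even, and a_n^R(x) = 4π²(n+1)² · exp(−2π²(n+1)²x), for n = 0, 1, 2, …. Then both alternating series ∑_{n=0}^∞ (−1)^n a_n^L(x) and ∑_{n=0}^∞ (−1)^n a_n^R(x) converge and are equal. (This is the identity of the two alternating-series representations of the density of the Kolmogorov-Gamma distribution KG(1,0), i.e., of the squared Kolmogorov distribution scaled by 1/π².) -/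
open Real

/-- Left-tail alternating series terms of the KG(1,0) density. -/
noncomputable def aL (x : ℝ) (n : ℕ) : ℝ :=
  if Odd n then
    2 / (Real.sqrt π * (2 * x) ^ ((3 : ℝ) / 2)) * Real.exp (-(n : ℝ) ^ 2 / (8 * x))
  else
    ((n : ℝ) + 1) ^ 2 / (Real.sqrt π * (2 * x) ^ ((5 : ℝ) / 2)) *
      Real.exp (-((n : ℝ) + 1) ^ 2 / (8 * x))

/-- Right-tail alternating series terms of the KG(1,0) density. -/
noncomputable def aR (x : ℝ) (n : ℕ) : ℝ :=
  4 * π ^ 2 * ((n : ℝ) + 1) ^ 2 * Real.exp (-2 * π ^ 2 * ((n : ℝ) + 1) ^ 2 * x)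

lemma kg_bound (y : ℝ) (hy : 0 < y) :
    Summable (fun n : ℕ => (2 * (n : ℝ) + 1) ^ 2 * Real.exp (-y * n)) := by
  have h0 := Real.summable_pow_mul_exp_neg_nat_mul 0 hy
  have h1 := Real.summable_pow_mul_exp_neg_nat_mul 1 hy
  have h2 := Real.summable_pow_mul_exp_neg_nat_mul 2 hy
  refine (((h2.mul_left 4).add (h1.mul_left 4)).add h0).congr fun n => ?_
  ring

lemma kg_term (c k : ℕ → ℝ) (hc : ∀ n, |c n| ≤ 1) (hk1 : ∀ n : ℕ, (n : ℝ) ≤ k n)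
    (hk2 : ∀ n : ℕ, k n ≤ (2 * (n : ℝ) + 1) ^ 2) (r y : ℝ) (hr : 0 < r) (hy : r < y) (n : ℕ) :
    ‖c n * (-k n * Real.exp (-k n * y))‖ ≤ (2 * (n : ℝ) + 1) ^ 2 * Real.exp (-r * n) := by
  have hn : (0 : ℝ) ≤ n := n.cast_nonneg
  have hk : 0 ≤ k n := hn.trans (hk1 n)
  rw [norm_mul, norm_mul, norm_neg, Real.norm_eq_abs, Real.norm_eq_abs, Real.norm_eq_abs,
    abs_of_nonneg hk, Real.abs_exp]
  have he : Real.exp (-k n * y) ≤ Real.exp (-r * n) := by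
    apply Real.exp_le_exp.2
    have : r * n ≤ y * k n := mul_le_mul hy.le (hk1 n) hn (hr.trans hy).le
    linarith
  calc |c n| * (k n * Real.exp (-k n * y)) ≤ 1 * (k n * Real.exp (-k n * y)) :=
        mul_le_mul_of_nonneg_right (hc n) (by positivity)
    _ = k n * Real.exp (-k n * y) := one_mul _
    _ ≤ _ := mul_le_mul (hk2 n) he (Real.exp_pos _).le (by positivity)

lemma kg_term0 (c k : ℕ → ℝ) (hc : ∀ n, |c n| ≤ 1) (hk1 : ∀ n : ℕ, (n : ℝ) ≤ k n)
    (y : ℝ) (hy : 0 < y) :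
    Summable (fun n => c n * Real.exp (-k n * y)) := by
  refine Summable.of_norm_bounded (kg_bound y hy) fun n => ?_
  have hn : (0 : ℝ) ≤ n := n.cast_nonneg
  rw [norm_mul, Real.norm_eq_abs, Real.norm_eq_abs, Real.abs_exp]
  have he : Real.exp (-k n * y) ≤ Real.exp (-y * n) := by
    apply Real.exp_le_exp.2
    have : y * n ≤ y * k n := mul_le_mul_of_nonneg_left (hk1 n) hy.le
    linarith
  refine mul_le_mul ((hc n).trans ?_) he (Real.exp_pos _).le (by positivity)
  nlinarith

lemma kg_term1 (c k : ℕ → ℝ) (hc : ∀ n, |c n| ≤ 1) (hk1 : ∀ n : ℕ, (n : ℝ) ≤ k n)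
    (hk2 : ∀ n : ℕ, k n ≤ (2 * (n : ℝ) + 1) ^ 2) (y : ℝ) (hy : 0 < y) :
    Summable (fun n => c n * (-k n * Real.exp (-k n * y))) :=
  Summable.of_norm_bounded (kg_bound (y / 2) (by positivity))
    (kg_term c k hc hk1 hk2 (y / 2) y (by positivity) (by linarith))

lemma kg_deriv (c k : ℕ → ℝ) (hc : ∀ n, |c n| ≤ 1) (hk1 : ∀ n : ℕ, (n : ℝ) ≤ k n)
    (hk2 : ∀ n : ℕ, k n ≤ (2 * (n : ℝ) + 1) ^ 2) (y : ℝ) (hy : 0 < y) :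
    HasDerivAt (fun z => ∑' n, c n * Real.exp (-k n * z))
      (∑' n, c n * (-k n * Real.exp (-k n * y))) y := by
  refine hasDerivAt_tsum_of_isPreconnected (t := Set.Ioi (y / 2)) (y₀ := y)
    (g' := fun n y => c n * (-k n * Real.exp (-k n * y)))
    (kg_bound (y / 2) (by positivity)) isOpen_Ioi isPreconnected_Ioi ?_ ?_ ?_
    (kg_term0 c k hc hk1 y hy) ?_
  · intro n z _
    have := (((hasDerivAt_id z).const_mul (-k n)).exp).const_mul (c n)
    refine this.congr_deriv ?_
    simp only [id]
    ring
  · intro n z hz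
    exact kg_term c k hc hk1 hk2 (y / 2) z (by positivity) hz n
  · simp only [Set.mem_Ioi]; linarith
  · simp only [Set.mem_Ioi]; linarith

lemma kg_theta (x : ℝ) (hx : 0 < x) :
    2 * ∑' n : ℕ, (1 : ℝ) * Real.exp (-(2 * (n : ℝ) + 1) ^ 2 * (1 / (8 * x))) =
      Real.sqrt (2 * π * x) *
        (1 - 2 * ∑' n : ℕ, (-1 : ℝ) ^ n * Real.exp (-((n : ℝ) + 1) ^ 2 * (2 * π ^ 2 * x))) := by
  have hpi := Real.pi_pos
  have ht : 0 < 2 * π * x := by positivity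
  have h1 := (HurwitzZeta.hasSum_int_evenKernel (1 / 2) (one_div_pos.2 ht)).nat_add_neg_add_one
  have h2 := HurwitzZeta.hasSum_nat_cosKernel₀ (1 / 2) ht
  have h3 := HurwitzZeta.evenKernel_functional_equation ((1 / 2 : ℝ) : UnitAddCircle)
    (1 / (2 * π * x))
  have e1 : 2 * ∑' n : ℕ, (1 : ℝ) * Real.exp (-(2 * (n : ℝ) + 1) ^ 2 * (1 / (8 * x))) =
      HurwitzZeta.evenKernel ((1 / 2 : ℝ) : UnitAddCircle) (1 / (2 * π * x)) := by
    rw [← h1.tsum_eq, ← tsum_mul_left]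
    congr 1
    ext n
    have a1 : -π * (((n : ℤ) : ℝ) + 1 / 2) ^ 2 * (1 / (2 * π * x)) =
        -(2 * (n : ℝ) + 1) ^ 2 * (1 / (8 * x)) := by
      push_cast; field_simp; ring
    have a2 : -π * (((-((n : ℤ) + 1) : ℤ) : ℝ) + 1 / 2) ^ 2 * (1 / (2 * π * x)) =
        -(2 * (n : ℝ) + 1) ^ 2 * (1 / (8 * x)) := by
      push_cast; field_simp; ring
    rw [a1, a2]; ring
  have e2 : (- 2) * ∑' n : ℕ, (-1 : ℝ) ^ n * Real.exp (-((n : ℝ) + 1) ^ 2 * (2 * π ^ 2 * x)) =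
      HurwitzZeta.cosKernel ((1 / 2 : ℝ) : UnitAddCircle) (2 * π * x) - 1 := by
    rw [← h2.tsum_eq, ← tsum_mul_left]
    congr 1
    ext n
    have a1 : Real.cos (2 * π * (1 / 2) * ((n : ℝ) + 1)) = (-1) ^ (n + 1) := by
      rw [← Real.cos_nat_mul_pi]; congr 1; push_cast; ring
    have a2 : -π * ((n : ℝ) + 1) ^ 2 * (2 * π * x) = -((n : ℝ) + 1) ^ 2 * (2 * π ^ 2 * x) := by
      ring
    rw [a1, a2]; ring
  rw [e1, h3, one_div_one_div, ← Real.sqrt_eq_rpow, one_div (2 * π * x), Real.sqrt_inv, one_div,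
    inv_inv]
  congr 1
  linarith

lemma kg_alg (x : ℝ) (hx : 0 < x) (T U : ℝ → ℝ) (Q V : ℝ)
    (dT : HasDerivAt T Q (1 / (8 * x))) (dU : HasDerivAt U V (2 * π ^ 2 * x))
    (hTU : ∀ z : ℝ, 0 < z →
      2 * T (1 / (8 * z)) = Real.sqrt (2 * π * z) * (1 - 2 * U (2 * π ^ 2 * z))) :
    2 * (Q * -(1 / (8 * x ^ 2))) =
      2 * π / (2 * Real.sqrt (2 * π * x)) * (1 - 2 * U (2 * π ^ 2 * x)) +
        Real.sqrt (2 * π * x) * -(2 * (V * (2 * π ^ 2))) := by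
  have hpi := Real.pi_pos
  have ht : 0 < 2 * π * x := by positivity
  have d8 : HasDerivAt (fun z : ℝ => 1 / (8 * z)) (-(1 / (8 * x ^ 2))) x := by
    have := ((hasDerivAt_id x).const_mul 8).inv (by simp only [id]; positivity)
    simp only [one_div]
    refine this.congr_deriv ?_
    simp only [id]; field_simp
  have d2 : HasDerivAt (fun z : ℝ => 2 * π ^ 2 * z) (2 * π ^ 2) x := by
    simpa using (hasDerivAt_id x).const_mul (2 * π ^ 2)
  have ds : HasDerivAt (fun z : ℝ => Real.sqrt (2 * π * z))
      (2 * π / (2 * Real.sqrt (2 * π * x))) x := by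
    have : HasDerivAt (fun z : ℝ => 2 * π * z) (2 * π) x := by
      simpa using (hasDerivAt_id x).const_mul (2 * π)
    exact this.sqrt ht.ne'
  have D1 := (HasDerivAt.comp x dT d8).const_mul 2
  have D2 := ds.mul (((HasDerivAt.comp x dU d2).const_mul 2).const_sub 1)
  have D3 := D2.congr_of_eventuallyEq (f₁ := fun z => 2 * T (1 / (8 * z))) (by
    filter_upwards [lt_mem_nhds hx] with z hz
    exact hTU z hz)
  exact D1.unique D3

theorem kg_density_two_series (x : ℝ) (hx : 0 < x) :
    Summable (fun n : ℕ => (-1 : ℝ) ^ n * aL x n) ∧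
    Summable (fun n : ℕ => (-1 : ℝ) ^ n * aR x n) ∧
    ∑' n : ℕ, (-1 : ℝ) ^ n * aL x n = ∑' n : ℕ, (-1 : ℝ) ^ n * aR x n := by
  have hpi := Real.pi_pos
  have hA : ∀ n : ℕ, |(1 : ℝ)| ≤ 1 := by simp
  have hB : ∀ n : ℕ, |(-1 : ℝ) ^ n| ≤ 1 := by simp
  have hA1 : ∀ n : ℕ, (n : ℝ) ≤ (2 * (n : ℝ) + 1) ^ 2 := fun n => by
    have hn : (0 : ℝ) ≤ n := n.cast_nonneg
    nlinarith
  have hB1 : ∀ n : ℕ, (n : ℝ) ≤ ((n : ℝ) + 1) ^ 2 := fun n => by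
    have hn : (0 : ℝ) ≤ n := n.cast_nonneg
    nlinarith
  have hB2 : ∀ n : ℕ, ((n : ℝ) + 1) ^ 2 ≤ (2 * (n : ℝ) + 1) ^ 2 := fun n => by
    have hn : (0 : ℝ) ≤ n := n.cast_nonneg
    nlinarith
  have h8 : 0 < 1 / (8 * x) := by positivity
  have h2 : 0 < 2 * π ^ 2 * x := by positivity
  have ht : 0 < 2 * π * x := by positivity
  have sT := kg_term0 (fun _ => 1) (fun n => (2 * (n : ℝ) + 1) ^ 2) hA hA1 _ h8
  have sQ := kg_term1 (fun _ => 1) (fun n => (2 * (n : ℝ) + 1) ^ 2) hA hA1 (fun _ => le_rfl) _ h8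
  have dT := kg_deriv (fun _ => 1) (fun n => (2 * (n : ℝ) + 1) ^ 2) hA hA1 (fun _ => le_rfl) _ h8
  have sV := kg_term1 (fun n => (-1) ^ n) (fun n => ((n : ℝ) + 1) ^ 2) hB hB1 hB2 _ h2
  have dU := kg_deriv (fun n => (-1) ^ n) (fun n => ((n : ℝ) + 1) ^ 2) hB hB1 hB2 _ h2
  have th := kg_theta x hx
  have key := kg_alg x hx _ _ _ _ dT dU kg_theta
  set T := ∑' n : ℕ, (1 : ℝ) * Real.exp (-(2 * (n : ℝ) + 1) ^ 2 * (1 / (8 * x))) with hT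
  set Q := ∑' n : ℕ, (1 : ℝ) * (-(2 * (n : ℝ) + 1) ^ 2 *
    Real.exp (-(2 * (n : ℝ) + 1) ^ 2 * (1 / (8 * x)))) with hQ
  set U := ∑' n : ℕ, (-1 : ℝ) ^ n * Real.exp (-((n : ℝ) + 1) ^ 2 * (2 * π ^ 2 * x)) with hU
  set V := ∑' n : ℕ, (-1 : ℝ) ^ n * (-((n : ℝ) + 1) ^ 2 *
    Real.exp (-((n : ℝ) + 1) ^ 2 * (2 * π ^ 2 * x))) with hV
  set s := Real.sqrt (2 * π * x) with hs
  have hs0 : 0 < s := Real.sqrt_pos.2 ht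
  have hss : s ^ 2 = 2 * π * x := Real.sq_sqrt ht.le
  have hs' : Real.sqrt π * Real.sqrt (2 * x) = s := by
    rw [hs, ← Real.sqrt_mul hpi.le]; congr 1; ring
  have c3 : Real.sqrt π * (2 * x) ^ ((3 : ℝ) / 2) = 2 * x * s := by
    rw [show (3 : ℝ) / 2 = 1 + 1 / 2 by norm_num, Real.rpow_add (by positivity), Real.rpow_one,
      ← Real.sqrt_eq_rpow, ← hs']; ring
  have c5 : Real.sqrt π * (2 * x) ^ ((5 : ℝ) / 2) = 4 * x ^ 2 * s := by
    rw [show (5 : ℝ) / 2 = (2 : ℕ) + 1 / 2 by norm_num, Real.rpow_add (by positivity),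
      Real.rpow_natCast, ← Real.sqrt_eq_rpow, ← hs']; ring
  have HR : HasSum (fun n : ℕ => (-1 : ℝ) ^ n * aR x n) (-(4 * π ^ 2) * V) := by
    refine (sV.hasSum.mul_left (-(4 * π ^ 2))).congr_fun ?_
    intro n
    simp only [aR]
    rw [show -2 * π ^ 2 * ((n : ℝ) + 1) ^ 2 * x = -((n : ℝ) + 1) ^ 2 * (2 * π ^ 2 * x) by ring]
    ring
  have HE : HasSum (fun n : ℕ => (-1 : ℝ) ^ (2 * n) * aL x (2 * n)) (-(1 / (4 * x ^ 2 * s)) * Q) := by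
    refine (sQ.hasSum.mul_left (-(1 / (4 * x ^ 2 * s)))).congr_fun ?_
    intro n
    have : ¬ Odd (2 * n) := by simp
    simp only [aL, this, if_false, c5]
    push_cast
    rw [show -(2 * (n : ℝ) + 1) ^ 2 / (8 * x) = -(2 * (n : ℝ) + 1) ^ 2 * (1 / (8 * x)) by ring]
    rw [pow_mul]
    norm_num
    ring
  have HO : HasSum (fun n : ℕ => (-1 : ℝ) ^ (2 * n + 1) * aL x (2 * n + 1)) (-(1 / (x * s)) * T) := by
    refine (sT.hasSum.mul_left (-(1 / (x * s)))).congr_fun ?_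
    intro n
    have : Odd (2 * n + 1) := by simp
    simp only [aL, this, if_true, c3]
    push_cast
    rw [show -(2 * (n : ℝ) + 1) ^ 2 / (8 * x) = -(2 * (n : ℝ) + 1) ^ 2 * (1 / (8 * x)) by ring]
    rw [pow_succ, pow_mul]
    norm_num
    field_simp
  have HL := HasSum.even_add_odd (f := fun n : ℕ => (-1 : ℝ) ^ n * aL x n) HE HO
  refine ⟨HL.summable, HR.summable, ?_⟩
  rw [HL.tsum_eq, HR.tsum_eq]
  have hU2 : 1 - 2 * U = 2 * T / s := by
    field_simp; linarith
  rw [hU2] at key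
  have key2 : Q / (4 * x ^ 2) = - T / x + 4 * π ^ 2 * s * V := by
    have : 2 * π / (2 * s) * (2 * T / s) = T / x := by
      have : 2 * π / (2 * s) * (2 * T / s) = 2 * π * T / s ^ 2 := by field_simp
      rw [this, hss]; field_simp
    rw [this] at key
    have h : 2 * (Q * -(1 / (8 * x ^ 2))) = - (Q / (4 * x ^ 2)) := by field_simp; ring
    rw [h] at key
    rw [show -T / x = -(T / x) by ring]
    linarith
  have : -(1 / (4 * x ^ 2 * s)) * Q = - (Q / (4 * x ^ 2)) / s := by field_simp
  rw [this, key2]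
  field_simp
  ring
end

section
/- Fix a real t with log(2)/(3π²) < t < 1/4 and a real c. For x > 0 define a_n(x; c, t) = (sinh(c/2)/(c/2)) · exp(−c²x/2) · a_n^L(x) if 0 < x < t, and a_n(x; c, t) = (sinh(c/2)/(c/2)) · exp(−c²x/2) · a_n^R(x) if x ≥ t, where a_n^L(x) = 2/(π^{1/2}(2x)^{3/2}) · exp(−n²/(8x)) for odd n, a_n^L(x) = (n+1)²/(π^{1/2}(2x)^{5/2}) · exp(−(n+1)²/(8x)) for even n, and a_n^R(x) = 4π²(n+1)² · exp(−2π²(n+1)²x). Then for every fixed x > 0, the sequence n ↦ a_n(x; c, t) is monotonically decreasing in n (where the factor sinh(c/2)/(c/2) is interpreted as 1 when c = 0). -/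
open Real

/-- The envelope terms `a_n(x; c, t)` of the KG(1,c) density, with the factor
`sinh(c/2)/(c/2)` interpreted as `1` when `c = 0`. -/
noncomputable def aSeq (c t x : ℝ) (n : ℕ) : ℝ :=
  (if c = 0 then 1 else Real.sinh (c / 2) / (c / 2)) * Real.exp (-c ^ 2 * x / 2) *
    (if x < t then aL x n else aR x n)

theorem aL_step (x : ℝ) (hx : 0 < x) (hx4 : x < 1 / 4) (n : ℕ) : aL x (n + 1) ≤ aL x n := by
  have hpow : (2 * x) ^ ((5 : ℝ) / 2) = (2 * x) ^ ((3 : ℝ) / 2) * (2 * x) := by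
    rw [← Real.rpow_add_one (by positivity)]
    norm_num
  have hP : 0 < Real.sqrt π * (2 * x) ^ ((3 : ℝ) / 2) := by positivity
  have hn0 : (0 : ℝ) ≤ n := Nat.cast_nonneg n
  unfold aL
  rw [hpow, ← mul_assoc]
  generalize Real.sqrt π * (2 * x) ^ ((3 : ℝ) / 2) = P at hP
  by_cases hn : Odd n
  · have h1 : ¬ Odd (n + 1) := by
      rw [Nat.not_odd_iff_even]; exact hn.add_one
    rw [if_neg h1, if_pos hn]
    push_cast
    have hy : 1 < 1 / (4 * x) := by
      rw [lt_div_iff₀ (by positivity)]; linarith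
    set y := 1 / (4 * x) with hydef
    have hn1 : (1 : ℝ) ≤ n := by exact_mod_cast hn.pos
    have he : -(n : ℝ) ^ 2 / (8 * x) =
        -((n : ℝ) + 1 + 1) ^ 2 / (8 * x) + (((n : ℝ) + 1) * y + ((n : ℝ) + 1) * y) := by
      rw [hydef]; field_simp; ring
    rw [he, Real.exp_add, Real.exp_add (((n : ℝ) + 1) * y)]
    have hA := Real.exp_pos (-((n : ℝ) + 1 + 1) ^ 2 / (8 * x))
    generalize Real.exp (-((n : ℝ) + 1 + 1) ^ 2 / (8 * x)) = A at hA
    have hE := Real.add_one_le_exp (((n : ℝ) + 1) * y)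
    generalize Real.exp (((n : ℝ) + 1) * y) = E at hE
    have hz : 0 ≤ ((n : ℝ) + 1) * y + 1 := by positivity
    have h2 : (((n : ℝ) + 1) * y + 1) * (((n : ℝ) + 1) * y + 1) ≤ E * E :=
      mul_le_mul hE hE hz (hz.trans hE)
    have h3 : 0 ≤ (y - 1) * (((n : ℝ) + 1) ^ 2 * y - 1) := by
      apply mul_nonneg (by linarith)
      nlinarith
    have h4 : ((n : ℝ) + 1 + 1) ^ 2 * y ≤ E * E := by nlinarith
    have h5 : ((n : ℝ) + 1 + 1) ^ 2 / (P * (2 * x)) * A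
        = 2 / P * (A * (((n : ℝ) + 1 + 1) ^ 2 * y)) := by
      rw [hydef]; field_simp; ring
    rw [h5]
    gcongr
  · have h1 : Odd (n + 1) := by
      rw [Nat.not_odd_iff_even] at hn; exact hn.add_one
    rw [if_pos h1, if_neg hn]
    push_cast
    apply mul_le_mul_of_nonneg_right _ (Real.exp_pos _).le
    rw [div_le_div_iff₀ hP (by positivity)]
    have : 2 * (2 * x) ≤ ((n : ℝ) + 1) ^ 2 := by nlinarith
    nlinarith

theorem aR_step (x : ℝ) (hx : Real.log 2 / (3 * π ^ 2) ≤ x) (hx0 : 0 < x) (n : ℕ) :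
    aR x (n + 1) ≤ aR x n := by
  have hn0 : (0 : ℝ) ≤ n := Nat.cast_nonneg n
  have hlog : Real.log 2 ≤ π ^ 2 * (2 * n + 3) * x := by
    rw [div_le_iff₀ (by positivity)] at hx
    have : 0 ≤ π ^ 2 * n * x := by positivity
    nlinarith
  have hE : 2 ≤ Real.exp (π ^ 2 * (2 * n + 3) * x) := by
    rw [← Real.log_le_iff_le_exp (by norm_num)]; exact hlog
  unfold aR
  push_cast
  have he : -2 * π ^ 2 * ((n : ℝ) + 1) ^ 2 * x = -2 * π ^ 2 * ((n : ℝ) + 1 + 1) ^ 2 * x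
      + (π ^ 2 * (2 * n + 3) * x + π ^ 2 * (2 * n + 3) * x) := by ring
  rw [he, Real.exp_add, Real.exp_add (π ^ 2 * (2 * n + 3) * x)]
  have hA := Real.exp_pos (-2 * π ^ 2 * ((n : ℝ) + 1 + 1) ^ 2 * x)
  generalize Real.exp (-2 * π ^ 2 * ((n : ℝ) + 1 + 1) ^ 2 * x) = A at hA
  generalize Real.exp (π ^ 2 * (2 * n + 3) * x) = E at hE
  have h2 : (n : ℝ) + 1 + 1 ≤ (n + 1) * E := by nlinarith
  have h3 : ((n : ℝ) + 1 + 1) ^ 2 ≤ ((n + 1) * E) ^ 2 := by gcongr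
  calc 4 * π ^ 2 * ((n : ℝ) + 1 + 1) ^ 2 * A ≤ 4 * π ^ 2 * ((n + 1) * E) ^ 2 * A := by gcongr
    _ = _ := by ring

/-- For a cutoff `log 2 / (3π²) < t < 1/4`, any `c`, and any fixed `x > 0`,
the sequence `n ↦ a_n(x; c, t)` is monotonically decreasing in `n`. -/
theorem aSeq_antitone (c t : ℝ) (ht₁ : Real.log 2 / (3 * π ^ 2) < t) (ht₂ : t < 1 / 4)
    (x : ℝ) (hx : 0 < x) :
    Antitone (fun n : ℕ => aSeq c t x n) := by
  apply antitone_nat_of_succ_le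
  intro n
  unfold aSeq
  apply mul_le_mul_of_nonneg_left
  · split_ifs with h
    · exact aL_step x hx (by linarith) n
    · exact aR_step x (by linarith) hx n
  · apply mul_nonneg _ (Real.exp_pos _).le
    split_ifs with h
    · norm_num
    · rcases le_total 0 c with hc | hc
      · exact div_nonneg (Real.sinh_nonneg_iff.2 (by linarith)) (by linarith)
      · exact div_nonneg_of_nonpos (Real.sinh_nonpos_iff.2 (by linarith)) (by linarith)
end

section
/- For every odd integer n ≥ 1 and every real x with 0 < x ≤ 1/4, one has (n+1)/(2x) + log(x) − 2·log(n+2) + 2·log(2) > 0. (This inequality establishes that a_n^L(x) ≥ a_{n+1}^L(x) for odd n when 0 < x < 1/4, where a_n^L(x) = 2/(π^{1/2}(2x)^{3/2}) exp(−n²/(8x)) for odd n and a_n^L(x) = (n+1)²/(π^{1/2}(2x)^{5/2}) exp(−(n+1)²/(8x)) for even n.) -/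
open Real

/-- For every odd integer `n ≥ 1` and every real `0 < x ≤ 1/4`,
`(n+1)/(2x) + log x − 2 log(n+2) + 2 log 2 > 0`. -/
theorem odd_left_term_ineq (n : ℕ) (hn : Odd n) (hn1 : 1 ≤ n) (x : ℝ)
    (hx : 0 < x) (hx' : x ≤ 1 / 4) :
    ((n : ℝ) + 1) / (2 * x) + Real.log x - 2 * Real.log ((n : ℝ) + 2) +
      2 * Real.log 2 > 0 := by
  have hn0 : (1 : ℝ) ≤ n := by exact_mod_cast hn1
  have h1 : Real.log ((n : ℝ) + 2) < n + 2 - 1 :=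
    Real.log_lt_sub_one_of_pos (by linarith) (by linarith)
  obtain ⟨y, hy⟩ : ∃ y : ℝ, y = 1 / (4 * x) := ⟨_, rfl⟩
  have hy1 : 1 ≤ y := by
    rw [hy, le_div_iff₀ (by linarith)]
    linarith
  have h2 : Real.log y ≤ y - 1 := Real.log_le_sub_one_of_pos (by linarith)
  have h3 : Real.log y = -(2 * Real.log 2 + Real.log x) := by
    rw [hy, one_div, Real.log_inv, Real.log_mul (by norm_num) hx.ne',
      show (4 : ℝ) = 2 ^ 2 by norm_num, Real.log_pow]
    push_cast
    ring
  have h4 : ((n : ℝ) + 1) / (2 * x) = 2 * (n + 1) * y := by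
    rw [hy]
    field_simp
    ring
  rw [h4]
  nlinarith [mul_nonneg (by linarith : (0 : ℝ) ≤ 2 * n + 1) (by linarith : 0 ≤ y - 1)]
end

section
/- For every real number c, ∫_0^∞ x^{−5/2} · exp(−(c²x + 1/(4x))/2) dx = 2^{5/2} · π^{1/2} · (|c| + 2) · exp(−|c|/2). (This evaluates the normalizing constant of the generalized inverse Gaussian distribution GIG(−3/2, c², 1/4), whose density is proportional to x^{−5/2} exp(−(c²x + 1/(4x))/2) on (0,∞); for c = 0 it reduces to an inverse-gamma normalizing constant.) -/
open Real MeasureTheory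

/-- Primitive of the Gaussian. -/
noncomputable def gigG (y : ℝ) : ℝ := ∫ s in (0 : ℝ)..y, Real.exp (-(1 / 2) * s ^ 2)

lemma gigG_deriv (y : ℝ) : HasDerivAt gigG (Real.exp (-(1 / 2) * y ^ 2)) y := by
  have h : Continuous (fun s : ℝ => Real.exp (-(1 / 2) * s ^ 2)) := by fun_prop
  exact (h.integral_hasStrictDerivAt 0 y).hasDerivAt

lemma gigG_zero : gigG 0 = 0 := by simp [gigG]

lemma gigG_neg (y : ℝ) : gigG (-y) = - gigG y := by
  have h := intervalIntegral.integral_comp_neg (a := 0) (b := y)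
    (fun s : ℝ => Real.exp (-(1 / 2) * s ^ 2))
  simp only [even_two, Even.neg_pow, neg_zero] at h
  unfold gigG
  rw [h, intervalIntegral.integral_symm]

lemma gigG_top : Filter.Tendsto gigG Filter.atTop (nhds (√(π / (1 / 2)) / 2)) := by
  have h := intervalIntegral_tendsto_integral_Ioi (μ := volume) 0
    (integrableOn_Ioi_exp_neg_mul_sq_iff.mpr (by norm_num : (0 : ℝ) < 1 / 2)) Filter.tendsto_id
  rw [integral_gaussian_Ioi] at h
  exact h

lemma gigG_bot : Filter.Tendsto gigG Filter.atBot (nhds (-(√(π / (1 / 2)) / 2))) := by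
  have h := (gigG_top.comp Filter.tendsto_neg_atBot_atTop).neg
  refine h.congr fun y => ?_
  simp [gigG_neg]

/-- The exponential factor after substitution. -/
noncomputable def gigE (a t : ℝ) : ℝ := Real.exp (-(a ^ 2 / t ^ 2 + t ^ 2 / 4) / 2)

/-- The antiderivative of `t ^ 2 * gigE a t`. -/
noncomputable def gigF (a t : ℝ) : ℝ :=
  -4 * (t * gigE a t) + 4 * (1 + a / 2) * Real.exp (-a / 2) * gigG (t / 2 - a / t)
    + 4 * (1 - a / 2) * Real.exp (a / 2) * gigG (t / 2 + a / t)

lemma gigF_deriv (a t : ℝ) (ht : 0 < t) : HasDerivAt (gigF a) (t ^ 2 * gigE a t) t := by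
  have ht' := ht.ne'
  have hdiv : HasDerivAt (fun t : ℝ => a / t) (-a / t ^ 2) t := by
    refine ((hasDerivAt_const t a).div (hasDerivAt_id t) ht').congr_deriv ?_
    simp
  have hhalf : HasDerivAt (fun t : ℝ => t / 2) (1 / 2) t := (hasDerivAt_id t).div_const 2
  have hu := (gigG_deriv (t / 2 - a / t)).comp t (hhalf.sub hdiv)
  have hv := (gigG_deriv (t / 2 + a / t)).comp t (hhalf.add hdiv)
  have hE : HasDerivAt (gigE a) (gigE a t * (a ^ 2 / t ^ 3 - t / 4)) t := by
    have h1 : HasDerivAt (fun t : ℝ => -((a / t) ^ 2 + (t / 2) ^ 2) / 2)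
        (a ^ 2 / t ^ 3 - t / 4) t := by
      refine ((((hdiv.pow 2).add (hhalf.pow 2)).neg).div_const 2).congr_deriv ?_
      simp
      field_simp
      ring
    have h2 := h1.exp
    have h3 : (fun t : ℝ => Real.exp (-((a / t) ^ 2 + (t / 2) ^ 2) / 2)) = gigE a := by
      funext s
      unfold gigE
      congr 1
      rw [div_pow, div_pow]
      norm_num
    rw [h3] at h2
    convert h2 using 2
    rw [← h3]
  have hF := ((((hasDerivAt_id t).mul hE).const_mul (-4)).add
    (hu.const_mul (4 * (1 + a / 2) * Real.exp (-a / 2)))).add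
    (hv.const_mul (4 * (1 - a / 2) * Real.exp (a / 2)))
  refine hF.congr_deriv ?_
  have e1 : Real.exp (-(1 / 2) * (t / 2 - a / t) ^ 2) = gigE a t * Real.exp (a / 2) := by
    unfold gigE
    rw [← Real.exp_add]
    congr 1
    field_simp
    ring
  have e2 : Real.exp (-(1 / 2) * (t / 2 + a / t) ^ 2) = gigE a t * Real.exp (-a / 2) := by
    unfold gigE
    rw [← Real.exp_add]
    congr 1
    field_simp
    ring
  have e3 : Real.exp (-a / 2) = (Real.exp (a / 2))⁻¹ := by
    rw [← Real.exp_neg]; congr 1; ring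
  rw [e1, e2, e3]
  have e4 := (Real.exp_pos (a / 2)).ne'
  simp only [id]
  field_simp
  ring

lemma gigE_zero (a : ℝ) :
    Filter.Tendsto (fun t => t * gigE a t) (nhdsWithin 0 (Set.Ioi 0)) (nhds 0) := by
  have h : Filter.Tendsto (fun t : ℝ => t) (nhdsWithin 0 (Set.Ioi 0)) (nhds 0) :=
    Filter.tendsto_id.mono_left nhdsWithin_le_nhds
  refine tendsto_of_tendsto_of_tendsto_of_le_of_le' tendsto_const_nhds h ?_ ?_
  · filter_upwards [self_mem_nhdsWithin] with t ht
    have : (0 : ℝ) < t := ht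
    unfold gigE; positivity
  · filter_upwards [self_mem_nhdsWithin] with t ht
    have ht' : (0 : ℝ) < t := ht
    have : gigE a t ≤ 1 := by
      unfold gigE
      rw [Real.exp_le_one_iff]
      have : 0 ≤ a ^ 2 / t ^ 2 + t ^ 2 / 4 := by positivity
      linarith
    nlinarith

lemma gigE_top (a : ℝ) :
    Filter.Tendsto (fun t => t * gigE a t) Filter.atTop (nhds 0) := by
  have h : Filter.Tendsto (fun t : ℝ => 8 / t) Filter.atTop (nhds 0) :=
    tendsto_const_nhds.div_atTop Filter.tendsto_id
  refine tendsto_of_tendsto_of_tendsto_of_le_of_le' tendsto_const_nhds h ?_ ?_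
  · filter_upwards [Filter.eventually_gt_atTop 0] with t ht
    unfold gigE; positivity
  · filter_upwards [Filter.eventually_gt_atTop 0] with t ht
    have h1 : t ^ 2 / 8 ≤ Real.exp ((a ^ 2 / t ^ 2 + t ^ 2 / 4) / 2) := by
      have := Real.add_one_le_exp ((a ^ 2 / t ^ 2 + t ^ 2 / 4) / 2)
      have : 0 ≤ a ^ 2 / t ^ 2 := by positivity
      linarith
    have h2 : gigE a t ≤ (t ^ 2 / 8)⁻¹ := by
      unfold gigE
      rw [neg_div, Real.exp_neg]
      exact inv_anti₀ (by positivity) h1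
    calc t * gigE a t ≤ t * (t ^ 2 / 8)⁻¹ := by gcongr
      _ = 8 / t := by field_simp

lemma gigF_top (a : ℝ) : Filter.Tendsto (gigF a) Filter.atTop
    (nhds (-4 * 0 + 4 * (1 + a / 2) * Real.exp (-a / 2) * (√(π / (1 / 2)) / 2)
    + 4 * (1 - a / 2) * Real.exp (a / 2) * (√(π / (1 / 2)) / 2))) := by
  have h0 : Filter.Tendsto (fun t : ℝ => a / t) Filter.atTop (nhds 0) :=
    tendsto_const_nhds.div_atTop Filter.tendsto_id
  have h1 : Filter.Tendsto (fun t : ℝ => t / 2) Filter.atTop Filter.atTop :=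
    Filter.tendsto_id.atTop_div_const (by norm_num)
  have hu : Filter.Tendsto (fun t : ℝ => t / 2 - a / t) Filter.atTop Filter.atTop := by
    simpa [sub_eq_add_neg] using h1.atTop_add h0.neg
  exact (((gigE_top a).const_mul _).add ((gigG_top.comp hu).const_mul _)).add
    ((gigG_top.comp (h1.atTop_add h0)).const_mul _)

lemma gigF_zero (a : ℝ) (ha : 0 ≤ a) : Filter.Tendsto (gigF a) (nhdsWithin 0 (Set.Ioi 0))
    (nhds (-4 * 0 + 4 * (1 + a / 2) * Real.exp (-a / 2) * (-(√(π / (1 / 2)) / 2))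
    + 4 * (1 - a / 2) * Real.exp (a / 2) * (√(π / (1 / 2)) / 2))) := by
  have h1 : Filter.Tendsto (fun t : ℝ => t / 2) (nhdsWithin 0 (Set.Ioi 0)) (nhds 0) := by
    have : Filter.Tendsto (fun t : ℝ => t / 2) (nhds 0) (nhds (0 / 2)) :=
      Filter.tendsto_id.div_const 2
    rw [zero_div] at this
    exact this.mono_left nhdsWithin_le_nhds
  rcases ha.eq_or_lt with rfl | ha
  · have hG : Filter.Tendsto (fun t : ℝ => gigG (t / 2)) (nhdsWithin 0 (Set.Ioi 0)) (nhds 0) := by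
      have := (gigG_deriv 0).continuousAt.tendsto.comp h1
      rwa [gigG_zero] at this
    have h := (((gigE_zero 0).const_mul (-4)).add (hG.const_mul 4)).add (hG.const_mul 4)
    have e : gigF 0 = fun t => -4 * (t * gigE 0 t) + 4 * gigG (t / 2) + 4 * gigG (t / 2) := by
      funext t; simp [gigF]
    rw [e]
    convert h using 2
    simp
  · have h0 : Filter.Tendsto (fun t : ℝ => a / t) (nhdsWithin 0 (Set.Ioi 0)) Filter.atTop := by
      simpa [div_eq_mul_inv] using tendsto_inv_nhdsGT_zero.const_mul_atTop ha
    have hu : Filter.Tendsto (fun t : ℝ => t / 2 - a / t) (nhdsWithin 0 (Set.Ioi 0))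
        Filter.atBot := by
      simpa [sub_eq_add_neg] using h1.add_atBot (Filter.tendsto_neg_atTop_atBot.comp h0)
    exact (((gigE_zero a).const_mul _).add ((gigG_bot.comp hu).const_mul _)).add
      ((gigG_top.comp (h1.add_atTop h0)).const_mul _)

lemma gig_integral (a : ℝ) (ha : 0 ≤ a) :
    ∫ t in Set.Ioi (0 : ℝ), t ^ 2 * gigE a t =
      4 * (1 + a / 2) * Real.exp (-a / 2) * √(π / (1 / 2)) := by
  set l := -4 * 0 + 4 * (1 + a / 2) * Real.exp (-a / 2) * (-(√(π / (1 / 2)) / 2))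
    + 4 * (1 - a / 2) * Real.exp (a / 2) * (√(π / (1 / 2)) / 2) with hl
  have hc : ContinuousWithinAt (Function.update (gigF a) 0 l) (Set.Ici 0) 0 := by
    rw [continuousWithinAt_update_same, Set.Ici_sdiff_left]
    exact gigF_zero a ha
  have heq : ∀ t : ℝ, 0 < t → Function.update (gigF a) 0 l =ᶠ[nhds t] gigF a := by
    intro t ht
    filter_upwards [lt_mem_nhds ht] with s hs
    exact Function.update_of_ne hs.ne' _ _
  have := integral_Ioi_of_hasDerivAt_of_nonneg hc
    (fun t ht => (gigF_deriv a t ht).congr_of_eventuallyEq (heq t ht))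
    (fun t _ => by unfold gigE; positivity)
    ((gigF_top a).congr' (by
      filter_upwards [Filter.eventually_gt_atTop 0] with s hs
      exact (Function.update_of_ne hs.ne' _ _).symm))
  rw [this, Function.update_self, hl]
  ring

/-- Normalizing constant of the generalized inverse Gaussian distribution
`GIG(−3/2, c², 1/4)`: for every real `c`,
`∫_0^∞ x^{−5/2} exp(−(c²x + 1/(4x))/2) dx = 2^{5/2} √π (|c| + 2) exp(−|c|/2)`. -/
theorem gig_normalizing_constant (c : ℝ) :
    ∫ x in Set.Ioi (0 : ℝ), x ^ (-(5 : ℝ) / 2) * Real.exp (-(c ^ 2 * x + 1 / (4 * x)) / 2) =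
      (2 : ℝ) ^ ((5 : ℝ) / 2) * Real.sqrt π * (|c| + 2) * Real.exp (-|c| / 2) := by
  rw [← integral_comp_rpow_Ioi _ (by norm_num : (-2 : ℝ) ≠ 0)]
  have h : ∀ t ∈ Set.Ioi (0 : ℝ), (|(-2 : ℝ)| * t ^ ((-2 : ℝ) - 1)) •
      ((t ^ (-2 : ℝ)) ^ (-(5 : ℝ) / 2) *
        Real.exp (-(c ^ 2 * t ^ (-2 : ℝ) + 1 / (4 * t ^ (-2 : ℝ))) / 2)) =
      2 * (t ^ 2 * gigE |c| t) := by
    intro t ht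
    have ht' : (0 : ℝ) < t := ht
    have e1 : t ^ (-2 : ℝ) = (t ^ 2)⁻¹ := by
      rw [Real.rpow_neg ht'.le]; norm_num
    have e2 : t ^ ((-2 : ℝ) - 1) * (t ^ (-2 : ℝ)) ^ (-(5 : ℝ) / 2) = t ^ 2 := by
      rw [← Real.rpow_mul ht'.le, ← Real.rpow_add ht', ← Real.rpow_natCast]
      norm_num
    have e3 : Real.exp (-(c ^ 2 * t ^ (-2 : ℝ) + 1 / (4 * t ^ (-2 : ℝ))) / 2) = gigE |c| t := by
      unfold gigE
      rw [e1, sq_abs]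
      congr 1
      field_simp
    rw [e3, smul_eq_mul, ← e2]
    norm_num
    ring
  rw [setIntegral_congr_fun measurableSet_Ioi h, integral_const_mul,
    gig_integral _ (abs_nonneg c)]
  have e1 : (2 : ℝ) ^ ((5 : ℝ) / 2) = 4 * √2 := by
    rw [Real.sqrt_eq_rpow, show (5 : ℝ) / 2 = 2 + 1 / 2 by norm_num,
      Real.rpow_add (by norm_num)]
    norm_num
  have e2 : √(π / (1 / 2)) = √2 * √π := by
    rw [← Real.sqrt_mul (by norm_num)]; congr 1; ring
  rw [e1, e2]
  ring
end

section
/- For every real number c ≠ 0, the series ∑_{k=1}^∞ 1/(k² + c²/(4π²)) converges and equals (2π²/c²) · ((c/2)·coth(c/2) − 1). (This computes the mean of the Kolmogorov-Gamma distribution KG(b,c): if κ = (1/(2π²))∑_{k=1}^∞ ε_k/(k² + c²/(4π²)) with ε_k i.i.d. Gamma(b,1), then E(κ) = b·c^{−2}·((c/2)coth(c/2) − 1).) -/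
open Real

/-- For every `c ≠ 0`, `∑_{k=1}^∞ 1/(k² + c²/(4π²)) = (2π²/c²)((c/2) coth(c/2) − 1)`,
the series computing the mean of the Kolmogorov-Gamma distribution `KG(b,c)`. -/
theorem kg_mean_series (c : ℝ) (hc : c ≠ 0) :
    HasSum (fun k : ℕ => 1 / (((k : ℝ) + 1) ^ 2 + c ^ 2 / (4 * π ^ 2)))
      (2 * π ^ 2 / c ^ 2 * (c / 2 * (Real.cosh (c / 2) / Real.sinh (c / 2)) - 1)) := by
  have hpi : (π : ℂ) ≠ 0 := by exact_mod_cast Real.pi_ne_zero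
  have hcc : (c : ℂ) ≠ 0 := by exact_mod_cast hc
  have hI := Complex.I_ne_zero
  have hI2 := Complex.I_sq
  have hs : Complex.sinh ((c : ℂ) / 2) ≠ 0 := by
    have : Real.sinh (c / 2) ≠ 0 := by
      rw [Ne, Real.sinh_eq_zero]
      exact div_ne_zero hc two_ne_zero
    exact_mod_cast this
  obtain ⟨x, hx⟩ : ∃ x : ℂ, x = ((c / (2 * π) : ℝ) : ℂ) * Complex.I := ⟨_, rfl⟩
  have him : x.im = c / (2 * π) := by rw [hx, Complex.im_ofReal_mul, Complex.I_im, mul_one]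
  have hxZ : x ∈ Complex.integerComplement := by
    rintro ⟨n, hn⟩
    have h1 := congrArg Complex.im hn
    rw [him] at h1
    have : c / (2 * π) ≠ 0 := div_ne_zero hc (by positivity)
    exact this (by simpa using h1.symm)
  have hx0 : x ≠ 0 := by
    intro h
    rw [h] at him
    have : c / (2 * π) ≠ 0 := div_ne_zero hc (by positivity)
    exact this (by simpa using him.symm)
  have hx2 : x ^ 2 = -((c : ℂ) ^ 2 / (4 * π ^ 2)) := by
    rw [hx, mul_pow, hI2]; push_cast; ring
  have hsum := (summable_cotTerm hxZ).hasSum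
  rw [show (∑' n, cotTerm x n) = π * Complex.cot (π * x) - 1 / x from
    (cot_series_rep' hxZ).symm] at hsum
  have h2 := hsum.mul_left (-1 / (2 * x))
  rw [← Complex.hasSum_ofReal]
  convert h2 using 1
  · rfl
  · funext k
    rw [cotTerm_identity hxZ]
    push_cast
    rw [show (c : ℂ) ^ 2 / (4 * π ^ 2) = -x ^ 2 by rw [hx2]; ring,
      show (x + ((k : ℂ) + 1)) * (x - (k + 1)) = -(((k : ℂ) + 1) ^ 2 + -x ^ 2) by ring,
      one_div_neg_eq_neg_one_div]
    field_simp
  · have hcot : Complex.cot (π * x) =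
        Complex.cosh ((c : ℂ) / 2) / (Complex.sinh ((c : ℂ) / 2) * Complex.I) := by
      have : (π : ℂ) * x = (c : ℂ) / 2 * Complex.I := by
        rw [hx]; push_cast; field_simp
      rw [this, Complex.cot, Complex.cos_mul_I, Complex.sin_mul_I]
    rw [hcot, hx]
    push_cast
    field_simp
    rw [hI2]
    ring
end

section
/- For every real θ ≠ 0, one has 0 < 1/θ² − 1/(2·cosh(θ) − 2) < 1/12. (The quantity 1/θ² − 1/(2cosh(θ) − 2) = 1/θ² + 1/(2 − e^θ − e^{−θ}) equals B''(θ), the second derivative of the cobin cumulant function B(θ) = log((e^θ − 1)/θ); thus the cobin variance function is strictly positive and bounded above by its value 1/12 at θ = 0, where the maximum variance 1/12 is attained by the uniform distribution.) -/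
open Real

theorem pos_of_hasDerivAt_pos {f f' : ℝ → ℝ} (h0 : f 0 = 0)
    (hd : ∀ t, HasDerivAt f (f' t) t) (hp : ∀ t, 0 < t → 0 < f' t) :
    ∀ t, 0 < t → 0 < f t := by
  intro t ht
  have hm : StrictMonoOn f (Set.Ici 0) := by
    apply strictMonoOn_of_deriv_pos (convex_Ici 0)
    · exact fun x _ => (hd x).continuousAt.continuousWithinAt
    · intro x hx
      rw [interior_Ici] at hx
      rw [(hd x).deriv]
      exact hp x hx
  have := hm (Set.mem_Ici.2 le_rfl) (Set.mem_Ici.2 ht.le) ht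
  rwa [h0] at this

theorem cosh_lower (t : ℝ) (ht : 0 < t) : 0 < 2 * Real.cosh t - 2 - t ^ 2 := by
  refine pos_of_hasDerivAt_pos (f := fun t => 2 * Real.cosh t - 2 - t ^ 2)
    (f' := fun t => 2 * Real.sinh t - 2 * t) (by simp) ?_ ?_ t ht
  · intro t
    have := (((Real.hasDerivAt_cosh t).const_mul 2).sub_const 2).sub (hasDerivAt_pow 2 t)
    exact this.congr_deriv (by norm_num)
  · intro t ht
    have := Real.self_lt_sinh_iff.2 ht
    linarith

theorem cosh_upper (t : ℝ) (ht : 0 < t) :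
    0 < 10 * t ^ 2 + 24 - 24 * Real.cosh t + 2 * (t ^ 2 * Real.cosh t) := by
  have hc := fun t => Real.hasDerivAt_cosh t
  have hs := fun t => Real.hasDerivAt_sinh t
  have hi := fun t : ℝ => hasDerivAt_id' t
  have hq := fun t : ℝ => hasDerivAt_pow 2 t
  have h3 := pos_of_hasDerivAt_pos
    (f := fun t => -12 * Real.sinh t + 12 * (t * Real.cosh t) + 2 * (t ^ 2 * Real.sinh t))
    (f' := fun t => 16 * (t * Real.sinh t) + 2 * (t ^ 2 * Real.cosh t)) (by simp)
    (by
      intro t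
      have hh := (((hs t).const_mul (-12)).add (((hi t).mul (hc t)).const_mul 12)).add
        (((hq t).mul (hs t)).const_mul 2)
      exact hh.congr_deriv (by norm_num; ring))
    (by
      intro t ht
      have := Real.sinh_pos_iff.2 ht
      have := Real.cosh_pos t
      positivity)
  have h2 := pos_of_hasDerivAt_pos
    (f := fun t => 20 - 20 * Real.cosh t + 8 * (t * Real.sinh t) + 2 * (t ^ 2 * Real.cosh t))
    (by simp)
    (by
      intro t
      have hh := ((((hc t).const_mul 20).const_sub 20).add (((hi t).mul (hs t)).const_mul 8)).add
        (((hq t).mul (hc t)).const_mul 2)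
      exact hh.congr_deriv (by norm_num; ring)) h3
  have h1 := pos_of_hasDerivAt_pos
    (f := fun t => 20 * t - 24 * Real.sinh t + 4 * (t * Real.cosh t) + 2 * (t ^ 2 * Real.sinh t))
    (by simp)
    (by
      intro t
      have hh := ((((hi t).const_mul 20).sub ((hs t).const_mul 24)).add
        (((hi t).mul (hc t)).const_mul 4)).add
        (((hq t).mul (hs t)).const_mul 2)
      exact hh.congr_deriv (by norm_num; ring)) h2
  exact pos_of_hasDerivAt_pos
    (f := fun t => 10 * t ^ 2 + 24 - 24 * Real.cosh t + 2 * (t ^ 2 * Real.cosh t))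
    (by simp)
    (by
      intro t
      have hh := ((((hq t).const_mul 10).add_const 24).sub ((hc t).const_mul 24)).add
        (((hq t).mul (hc t)).const_mul 2)
      exact hh.congr_deriv (by norm_num; ring)) h1 t ht

/-- For every `θ ≠ 0`, `0 < 1/θ² − 1/(2 cosh θ − 2) < 1/12`: the cobin variance
function `B''(θ)` is strictly positive and bounded above by its value `1/12` at `0`. -/
theorem cobin_variance_function_bounds (θ : ℝ) (hθ : θ ≠ 0) :
    0 < 1 / θ ^ 2 - 1 / (2 * Real.cosh θ - 2) ∧
    1 / θ ^ 2 - 1 / (2 * Real.cosh θ - 2) < 1 / 12 := by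
  have hl := cosh_lower |θ| (abs_pos.2 hθ)
  have hu := cosh_upper |θ| (abs_pos.2 hθ)
  rw [Real.cosh_abs, sq_abs] at hl hu
  have hx : 0 < θ ^ 2 := by positivity
  have hC : 0 < 2 * Real.cosh θ - 2 := by linarith
  constructor
  · exact sub_pos.2 (one_div_lt_one_div_of_lt hx (by linarith))
  · rw [div_sub_div _ _ hx.ne' hC.ne', div_lt_div_iff₀ (by positivity) (by norm_num)]
    nlinarith
end

section
/- Let B'(η) = e^η/(e^η − 1) − 1/η for η ≠ 0 (the inverse cobit link, i.e., the mean of the cobin distribution with natural parameter η). Then lim_{x→+∞} (1 − B'(πx)) / (1/2 − arctan(x)/π) = 1 and lim_{x→−∞} B'(πx) / (arctan(x)/π + 1/2) = 1. That is, up to the scaling of the linear predictor by π, the inverse cobit link approaches 0 and 1 at the same asymptotic rate as the inverse cauchit link arctan(x)/π + 1/2 (the Cauchy distribution c.d.f.). -/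
open Real Filter

/-- The inverse cobit link `B'(η) = e^η/(e^η − 1) − 1/η` (mean of the cobin
distribution with natural parameter `η`). -/
noncomputable def cobitInv (η : ℝ) : ℝ := Real.exp η / (Real.exp η - 1) - 1 / η

theorem cobit_aux_num :
    Tendsto (fun y : ℝ => y * (1 - cobitInv y)) atTop (nhds 1) := by
  have h1 := Real.tendsto_pow_mul_exp_neg_atTop_nhds_zero 1
  have h2 : Tendsto (fun y : ℝ => Real.exp (-y)) atTop (nhds 0) :=
    Real.tendsto_exp_neg_atTop_nhds_zero
  have h3 := (h1.div (h2.const_sub 1) (by norm_num)).const_sub 1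
  simp only [sub_zero, div_one] at h3
  refine h3.congr' ?_
  filter_upwards [eventually_gt_atTop 0] with y hy
  have he : 1 < Real.exp y := Real.one_lt_exp_iff.mpr hy
  have h5 : Real.exp y - 1 ≠ 0 := by linarith
  have h6 : Real.exp y ≠ 0 := by positivity
  simp only [cobitInv, Real.exp_neg, Pi.div_apply, pow_one]
  have h7 : 1 - (Real.exp y)⁻¹ ≠ 0 := by
    rw [show 1 - (Real.exp y)⁻¹ = (Real.exp y - 1) / Real.exp y by field_simp]
    exact div_ne_zero h5 h6
  have hy' := hy.ne'
  field_simp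
  ring

theorem cobit_aux_den :
    Tendsto (fun x : ℝ => x * Real.arctan x⁻¹) atTop (nhds 1) := by
  have h := (Real.hasDerivAt_arctan 0).tendsto_slope_zero_right
  have h2 := h.comp tendsto_inv_atTop_nhdsGT_zero
  simpa [Function.comp_def] using h2

theorem cobit_aux_top :
    Tendsto (fun x : ℝ => (1 - cobitInv (π * x)) / (1 / 2 - Real.arctan x / π))
      atTop (nhds 1) := by
  have h1 := cobit_aux_num.comp (tendsto_id.const_mul_atTop Real.pi_pos)
  have h := h1.div cobit_aux_den one_ne_zero
  rw [div_one] at h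
  refine h.congr' ?_
  filter_upwards [eventually_gt_atTop 0] with x hx
  have hp := Real.pi_pos
  have e : 1 / 2 - Real.arctan x / π = Real.arctan x⁻¹ / π := by
    rw [Real.arctan_inv_of_pos hx]; field_simp
  have h0 : 0 < Real.arctan x⁻¹ := Real.arctan_pos.mpr (inv_pos.mpr hx)
  rw [e]
  simp only [Function.comp_apply, Pi.div_apply, id]
  field_simp

theorem cobit_aux_symm (y : ℝ) (hy : 0 < y) : cobitInv (-y) = 1 - cobitInv y := by
  have he : 1 < Real.exp y := Real.one_lt_exp_iff.mpr hy
  have h5 : Real.exp y - 1 ≠ 0 := by linarith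
  have h8 : 1 - Real.exp y ≠ 0 := by linarith
  have h6 : Real.exp y ≠ 0 := by positivity
  have e : (Real.exp y)⁻¹ / ((Real.exp y)⁻¹ - 1) = -1 / (Real.exp y - 1) := by
    rw [show (Real.exp y)⁻¹ - 1 = (1 - Real.exp y) / Real.exp y by field_simp]
    field_simp
    ring
  simp only [cobitInv, Real.exp_neg]
  rw [e]
  field_simp
  ring

/-- Up to scaling of the linear predictor by `π`, the inverse cobit link approaches
`0` and `1` at the same asymptotic rate as the Cauchy c.d.f. `arctan x/π + 1/2`:
`lim_{x→+∞} (1 − B'(πx))/(1/2 − arctan x/π) = 1` and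
`lim_{x→−∞} B'(πx)/(arctan x/π + 1/2) = 1`. -/
theorem cobit_cauchit_tail_equivalence :
    Tendsto (fun x : ℝ => (1 - cobitInv (π * x)) / (1 / 2 - Real.arctan x / π))
      atTop (nhds 1) ∧
    Tendsto (fun x : ℝ => cobitInv (π * x) / (Real.arctan x / π + 1 / 2))
      atBot (nhds 1) := by
  refine ⟨cobit_aux_top, ?_⟩
  refine (cobit_aux_top.comp tendsto_neg_atBot_atTop).congr' ?_
  filter_upwards [eventually_lt_atBot 0] with x hx
  have hy : 0 < π * (-x) := mul_pos Real.pi_pos (by linarith)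
  have h := cobit_aux_symm _ hy
  rw [show -(π * (-x)) = π * x by ring] at h
  simp only [Function.comp_apply]
  rw [h, Real.arctan_neg]
  congr 1
  ring
end
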